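/- Let ε ∈ (0, 1/10] with 1/ε ∈ ℤ, g' = 1 + 4ε, and N = g'/ε² (an integer). Let T be a finite set of items with sizes S : T → ℝ≥0, partitioned into large items 𝓛 (size in [ε, 1/ε²], an integer multiple of ε²) and small items 𝒮 (size < ε); for each large size ℓ let 𝓛_ℓ be the large items of size ℓ. Let B be a finite set of bins and k ∈ ℤ≥1. If the MILP (defined in the context) has a feasible solution, then there exists a fractional packing of T into B satisfying cardinality constraint k with maximum bin load at most g' + ε² + ε, which is at most (1 + 2ε)·g'. -/

import Mathlib

open scoped Classical

/-- The first component `α` of the pattern determined by `β : {1,…,N} → {0,…,M}`,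
namely `α = ∑ r, r·β r`. -/
def patAlpha {N M : ℕ} (p : Fin N → Fin (M + 1)) : ℕ :=
  ∑ r : Fin N, ((r : ℕ) + 1) * (p r : ℕ)

/-- The set of feasible patterns: vectors `β` with `∑ r, r·β r ≤ M` (where `M = 1/ε⁴`,
so that the associated item size `α·ε²` is at most `1/ε²`). Each entry of a feasible
pattern is at most `M`, so no pattern is lost by bounding entries by `M`. -/
def feasiblePatterns (N M : ℕ) : Finset (Fin N → Fin (M + 1)) :=
  Finset.univ.filter (fun p => patAlpha p ≤ M)

/-- The total (scaled) size `γ + ∑ r, r·δ r` of a configuration `c = (γ, δ)`. -/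
def confWeight {N : ℕ} (c : Fin (N + 1) × (Fin N → Fin (N + 1))) : ℕ :=
  (c.1 : ℕ) + ∑ r : Fin N, ((r : ℕ) + 1) * (c.2 r : ℕ)

/-- The set of feasible configurations: vectors `(γ, δ)` with `γ + ∑ r, r·δ r ≤ N`
(where `N = (1+4ε)/ε²`, so the bin size is at most `g' = 1 + 4ε`). Each component
of a feasible configuration is at most `N`, so none is lost by bounding entries. -/
def feasibleConfigs (N : ℕ) : Finset (Fin (N + 1) × (Fin N → Fin (N + 1))) :=
  Finset.univ.filter (fun c => confWeight c ≤ N)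

/-- A list of fractional amounts `x i` of total at most `K`, poured in order of nonincreasing
size `s i` into `K` consecutive slots of unit capacity: an item meeting slot `j + 1` is no
larger than the total size poured into slot `j`. -/
theorem exists_slot_weights_of_antitone {n K : ℕ} {s x : Fin n → ℝ} (hs : Antitone s)
    (hx : ∀ i, 0 ≤ x i) (hK : ∑ i, x i ≤ K) :
    ∃ w : Fin n → ℕ → ℝ, (∀ i j, 0 ≤ w i j) ∧ (∀ i, ∑ j ∈ Finset.range K, w i j = x i) ∧
      (∀ j, ∑ i, w i j ≤ 1) ∧ ∀ i j, 0 < w i (j + 1) → s i ≤ ∑ l, w l j * s l := by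
  set X : ℕ → ℝ := fun l => if h : l < n then x ⟨l, h⟩ else 0 with hX
  set F : ℕ → ℝ := fun m => ∑ l ∈ Finset.range m, X l with hF
  set φ : ℕ → ℝ → ℝ := fun j t => max 0 (min (t - j) 1) with hφ
  have hX0 : ∀ l, 0 ≤ X l := fun l => by
    simp only [hX]
    split_ifs
    exacts [hx _, le_rfl]
  have hXx : ∀ i : Fin n, X i = x i := fun i => by simp [hX]
  have hFmono : Monotone F := monotone_nat_of_le_succ fun m => by
    simp only [hF, Finset.sum_range_succ]
    linarith [hX0 m]
  have hFn : F n = ∑ i, x i := by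
    simp only [hF, ← Fin.sum_univ_eq_sum_range, hXx]
  have hF0 : ∀ m, 0 ≤ F m := fun m => Finset.sum_nonneg fun l _ => hX0 l
  have hφmono : ∀ j, Monotone (φ j) := fun j a b hab => by
    simp only [hφ]
    gcongr
  have hφzero : ∀ j, φ j 0 = 0 := fun j => by
    have : (0 : ℝ) ≤ j := j.cast_nonneg
    simp only [hφ, max_eq_left_iff]
    exact min_le_of_left_le (by linarith)
  have hφle : ∀ j t, φ j t ≤ 1 := fun j t => max_le zero_le_one (min_le_right _ _)
  have hφsum : ∀ (L : ℕ) (t : ℝ), 0 ≤ t → ∑ j ∈ Finset.range L, φ j t = min t L := by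
    intro L t ht
    induction L with
    | zero => simp [ht]
    | succ L ih =>
      rw [Finset.sum_range_succ, ih]
      simp only [hφ]
      push_cast
      grind
  have htel : ∀ j, ∑ i : Fin n, (φ j (F (i + 1)) - φ j (F i)) = φ j (F n) := fun j => by
    rw [Fin.sum_univ_eq_sum_range (fun i => φ j (F (i + 1)) - φ j (F i)) n,
      Finset.sum_range_sub (fun i => φ j (F i))]
    simp [hF, hφzero]
  have hw0 : ∀ (i : Fin n) j, 0 ≤ φ j (F (i + 1)) - φ j (F i) := fun i j =>
    sub_nonneg.2 (hφmono j (hFmono (Nat.le_succ _)))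
  refine ⟨fun i j => φ j (F (i + 1)) - φ j (F i), hw0, fun i => ?_, fun j => ?_,
    fun i j hij => ?_⟩
  · have h1 : F (i + 1) ≤ K := (hFmono (Nat.succ_le_of_lt i.2)).trans (hFn.trans_le hK)
    have h2 : F i ≤ K := (hFmono (Nat.le_succ _)).trans h1
    rw [Finset.sum_sub_distrib, hφsum _ _ (hF0 _), hφsum _ _ (hF0 _), min_eq_left h1,
      min_eq_left h2]
    simp only [hF, Finset.sum_range_succ, hXx]
    ring
  · rw [htel]
    exact hφle _ _
  · have hi : (j : ℝ) + 1 < F (i + 1) := by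
      by_contra! hle
      have : φ (j + 1) (F (i + 1)) = 0 := by
        simp only [hφ, max_eq_left_iff]
        push_cast
        exact min_le_of_left_le (by linarith)
      have h0 : 0 ≤ φ (j + 1) (F i) := le_max_left _ _
      linarith
    have hfull : φ j (F n) = 1 := by
      have : F (i + 1) ≤ F n := hFmono (Nat.succ_le_of_lt i.2)
      simp only [hφ]
      rw [min_eq_right (by linarith), max_eq_right zero_le_one]
    calc s i = ∑ l : Fin n, (φ j (F (l + 1)) - φ j (F l)) * s i := by
          rw [← Finset.sum_mul, htel, hfull, one_mul]
      _ ≤ _ := Finset.sum_le_sum fun l _ => by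
          rcases (hw0 l j).eq_or_lt with h | h
          · simp [← h]
          refine mul_le_mul_of_nonneg_left (hs ?_) h.le
          by_contra! hil
          have h1 : F (i + 1) ≤ F l := hFmono (Nat.succ_le_of_lt hil)
          have h2 : φ j (F l) = 1 := by
            simp only [hφ]
            rw [min_eq_right (by linarith), max_eq_right zero_le_one]
          linarith [hφle j (F (l + 1))]

theorem exists_slot_weights {I : Type*} [Fintype I] {K : ℕ} (s : I → ℝ) {x : I → ℝ}
    (hx : ∀ i, 0 ≤ x i) (hK : ∑ i, x i ≤ K) :
    ∃ w : I → ℕ → ℝ, (∀ i j, 0 ≤ w i j) ∧ (∀ i, ∑ j ∈ Finset.range K, w i j = x i) ∧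
      (∀ j, ∑ i, w i j ≤ 1) ∧ ∀ i j, 0 < w i (j + 1) → s i ≤ ∑ l, w l j * s l := by
  let e₀ := (Fintype.equivFin I).symm
  let e := (Tuple.sort fun i => -s (e₀ i)).trans e₀
  have hs : Antitone (s ∘ e) := fun a b hab =>
    neg_le_neg_iff.1 (Tuple.monotone_sort (fun i => -s (e₀ i)) hab)
  obtain ⟨w, hw0, hwx, hw1, hws⟩ := exists_slot_weights_of_antitone (K := K) hs
    (x := x ∘ e) (fun i => hx _) (by rwa [Function.comp_def, e.sum_comp])
  refine ⟨fun i => w (e.symm i), fun i => hw0 _, fun i => ?_, fun j => ?_, fun i j hij => ?_⟩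
  · simpa using hwx (e.symm i)
  · simpa [e.symm.sum_comp (fun i => w i j)] using hw1 j
  · have := hws _ _ hij
    rw [← e.symm.sum_comp] at this
    simpa using this

/-- Shmoys–Tardos rounding: a fractional assignment of items to bins can be rounded to an
integral one that respects integral cardinality bounds and increases each load by at most the
largest item size. -/
theorem exists_rounded_assignment {I B : Type*} [Fintype I] [Fintype B] {s : I → ℝ} {e : ℝ}
    (hs : ∀ i, 0 ≤ s i) (he : 0 ≤ e) (hse : ∀ i, s i ≤ e) {x : I → B → ℝ}
    (hx : ∀ i b, 0 ≤ x i b) (hx1 : ∀ i, ∑ b, x i b = 1) {K : B → ℕ}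
    (hK : ∀ b, ∑ i, x i b ≤ K b) :
    ∃ f : I → B, ∀ b, (Finset.univ.filter fun i => f i = b).card ≤ K b ∧
      ∑ i ∈ Finset.univ.filter (fun i => f i = b), s i ≤ ∑ i, x i b * s i + e := by
  choose w hw0 hwx hw1 hws using fun b => exists_slot_weights s (fun i => hx i b) (hK b)
  let slots : Finset (Σ _ : B, ℕ) := Finset.univ.sigma fun b => Finset.range (K b)
  let t : I → Finset (Σ _ : B, ℕ) := fun i => slots.filter fun q => 0 < w q.1 i q.2
  have hall : ∀ A : Finset I, A.card ≤ (A.biUnion t).card := fun A => by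
    have h1 : ∀ i ∈ A, (1 : ℝ) ≤ ∑ q ∈ A.biUnion t, w q.1 i q.2 := fun i hi => by
      calc (1 : ℝ) = ∑ q ∈ slots, w q.1 i q.2 := by
            simp only [slots, Finset.sum_sigma, hwx, hx1]
        _ = ∑ q ∈ t i, w q.1 i q.2 := (Finset.sum_filter_of_ne fun q _ hq =>
            (hw0 q.1 i q.2).lt_of_ne' hq).symm
        _ ≤ _ := Finset.sum_le_sum_of_subset_of_nonneg (Finset.subset_biUnion_of_mem t hi)
            fun q _ _ => hw0 _ _ _
    have h2 : (A.card : ℝ) ≤ (A.biUnion t).card := by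
      calc (A.card : ℝ) = ∑ i ∈ A, (1 : ℝ) := by simp
        _ ≤ ∑ i ∈ A, ∑ q ∈ A.biUnion t, w q.1 i q.2 := Finset.sum_le_sum h1
        _ = ∑ q ∈ A.biUnion t, ∑ i ∈ A, w q.1 i q.2 := Finset.sum_comm
        _ ≤ ∑ q ∈ A.biUnion t, (1 : ℝ) := Finset.sum_le_sum fun q _ =>
            (Finset.sum_le_sum_of_subset_of_nonneg (Finset.subset_univ _)
              fun i _ _ => hw0 _ _ _).trans (hw1 q.1 q.2)
        _ = _ := by simp
    exact_mod_cast h2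
  obtain ⟨g, hginj, hg⟩ := (Finset.all_card_le_biUnion_card_iff_exists_injective t).1 hall
  have hgt : ∀ i, (g i).2 < K (g i).1 ∧ 0 < w (g i).1 i (g i).2 := fun i => by
    simpa [t, slots] using hg i
  refine ⟨fun i => (g i).1, fun b => ?_⟩
  have hinj : Set.InjOn (fun i => (g i).2)
      (Finset.univ.filter fun i => (g i).1 = b : Finset I) := fun i hi j hj hij => by
    simp only [Finset.coe_filter, Finset.mem_univ, true_and, Set.mem_ofPred_eq] at hi hj
    exact hginj (Sigma.ext (hi.trans hj.symm) (heq_of_eq hij))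
  have hmaps : ∀ i ∈ Finset.univ.filter (fun i => (g i).1 = b),
      (g i).2 ∈ Finset.range (K b) := fun i hi => by
    have := (hgt i).1
    rw [(Finset.mem_filter.1 hi).2] at this
    exact Finset.mem_range.2 this
  refine ⟨(Finset.card_le_card_of_injOn _ hmaps hinj).trans_eq (Finset.card_range _), ?_⟩
  let h : ℕ → ℝ := fun j => Nat.casesOn j e fun j => ∑ l, w b l j * s l
  have hh0 : ∀ j, 0 ≤ h j := fun j => by
    cases j with
    | zero => exact he
    | succ j => exact Finset.sum_nonneg fun l _ => mul_nonneg (hw0 _ _ _) (hs _)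
  have hsh : ∀ i, (g i).1 = b → s i ≤ h (g i).2 := fun i hi => by
    have hpos := (hgt i).2
    rw [hi] at hpos
    generalize (g i).2 = j at hpos
    cases j with
    | zero => exact hse i
    | succ j => exact hws b i j hpos
  calc ∑ i ∈ Finset.univ.filter (fun i => (g i).1 = b), s i
      ≤ ∑ i ∈ Finset.univ.filter (fun i => (g i).1 = b), h (g i).2 :=
        Finset.sum_le_sum fun i hi => hsh i (Finset.mem_filter.1 hi).2
    _ = ∑ j ∈ (Finset.univ.filter (fun i => (g i).1 = b)).image (fun i => (g i).2), h j :=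
        (Finset.sum_image hinj).symm
    _ ≤ ∑ j ∈ Finset.range (K b + 1), h j :=
        Finset.sum_le_sum_of_subset_of_nonneg
          ((Finset.image_subset_iff.2 hmaps).trans (Finset.range_mono (Nat.le_succ _)))
          fun j _ _ => hh0 j
    _ = ∑ j ∈ Finset.range (K b), ∑ l, w b l j * s l + e := Finset.sum_range_succ' _ _
    _ = _ := by
        rw [Finset.sum_comm]
        simp only [← Finset.sum_mul, hwx]

/-- A finite set can be partitioned into classes of prescribed cardinalities. -/
theorem exists_map_with_fiber_card {X Q : Type*} [Nonempty Q] (A : Finset X) (P : Finset Q)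
    (z : Q → ℕ) (h : ∑ p ∈ P, z p = A.card) :
    ∃ f : X → Q, (∀ a ∈ A, f a ∈ P) ∧ ∀ p ∈ P, (A.filter fun a => f a = p).card = z p := by
  induction P using Finset.induction_on generalizing A with
  | empty =>
    have : A = ∅ := Finset.card_eq_zero.1 (by simpa using h.symm)
    exact ⟨fun _ => Classical.arbitrary Q, by simp [this], by simp⟩
  | insert p P hp ih =>
    rw [Finset.sum_insert hp] at h
    obtain ⟨A', hA', hcard⟩ := Finset.exists_subset_card_eq (s := A) (n := z p) (by omega)
    obtain ⟨f, hf, hfc⟩ := ih (A \ A') (by rw [Finset.card_sdiff_of_subset hA']; omega)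
    refine ⟨fun a => if a ∈ A' then p else f a, fun a ha => ?_, fun q hq => ?_⟩
    · by_cases ha' : a ∈ A'
      · simp [ha']
      · simp [ha', hf a (by simp [ha, ha'])]
    · rcases Finset.mem_insert.1 hq with rfl | hq
      · rw [← hcard]
        congr 1
        ext a
        have := fun h1 h2 => hf a (Finset.mem_sdiff.2 ⟨h1, h2⟩)
        by_cases ha' : a ∈ A' <;> simp [ha']
        · exact hA' ha'
        · rintro h1 rfl
          exact hp (this h1 ha')
      · rw [← hfc q hq]
        congr 1
        ext a
        have hpq : p ≠ q := fun h => hp (h ▸ hq)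
        by_cases ha' : a ∈ A' <;> simp [ha', hpq]

/-- An integral transportation plan exists as soon as the total demand is at least the total
supply. -/
theorem exists_transport {X Y : Type*} [Fintype X] [Fintype Y] (a : X → ℕ) (d : Y → ℕ)
    (h : ∑ i, a i ≤ ∑ j, d j) :
    ∃ m : X → Y → ℕ, (∀ i, ∑ j, m i j = a i) ∧ ∀ j, ∑ i, m i j ≤ d j := by
  obtain ⟨e⟩ : Nonempty ((Σ i, Fin (a i)) ↪ (Σ j, Fin (d j))) :=
    Function.Embedding.nonempty_of_card_le (by simpa using h)
  refine ⟨fun i j => (Finset.univ.filter fun u : Fin (a i) => (e ⟨i, u⟩).1 = j).card,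
    fun i => ?_, fun j => ?_⟩
  · exact (Finset.card_eq_sum_card_fiberwise (s := Finset.univ) (t := Finset.univ)
      (f := fun u : Fin (a i) => (e ⟨i, u⟩).1) (by simp)).symm.trans (by simp)
  · rw [← Finset.card_sigma]
    calc _ ≤ ((Finset.univ : Finset (Fin (d j))).map
          (Function.Embedding.sigmaMk (β := fun j => Fin (d j)) j)).card := by
          refine Finset.card_le_card_of_injOn e (fun u hu => ?_) e.injective.injOn
          have hu' : (e u).1 = j := by simpa using hu
          subst hu'
          simp
      _ = d j := by simp

/-- Rounding of a fractional assignment of items to types of bins, where each bin `b` has a type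
`C b` and the bounds for a type are multiples of the number of its bins. -/
theorem exists_rounded_assignment_of_types {I B Q : Type*} [Fintype I] [Fintype B]
    {P : Finset Q} {C : B → Q} (hC : ∀ b, C b ∈ P) {y : Q → ℕ}
    (hy : ∀ q ∈ P, (Finset.univ.filter fun b => C b = q).card = y q) {s : I → ℝ} {e : ℝ}
    (hs : ∀ i, 0 ≤ s i) (he : 0 ≤ e) (hse : ∀ i, s i ≤ e) {x : I → Q → ℝ}
    (hx : ∀ i q, 0 ≤ x i q) (hx1 : ∀ i, ∑ q ∈ P, x i q = 1) {K L : Q → ℝ}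
    (hK : ∀ q ∈ P, ∑ i, x i q ≤ y q * K q) (hL : ∀ q ∈ P, ∑ i, x i q * s i ≤ y q * L q)
    (hKint : ∀ q, ∃ a : ℤ, K q = a) :
    ∃ f : I → B, ∀ b, ((Finset.univ.filter fun i => f i = b).card : ℝ) ≤ K (C b) ∧
      ∑ i ∈ Finset.univ.filter (fun i => f i = b), s i ≤ L (C b) + e := by
  have hypos : ∀ b, (0 : ℝ) < y (C b) := fun b => by
    rw [← hy _ (hC b)]
    exact_mod_cast Finset.card_pos.2 ⟨b, by simp⟩
  have hK0 : ∀ b, 0 ≤ K (C b) := fun b => by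
    have := (Finset.sum_nonneg fun i _ => hx i (C b)).trans (hK _ (hC b))
    exact nonneg_of_mul_nonneg_right this (hypos b)
  have hKnat : ∀ b, ∃ a : ℕ, K (C b) = a := fun b => by
    obtain ⟨a, ha⟩ := hKint (C b)
    have h0 := hK0 b
    rw [ha] at h0
    obtain ⟨m, rfl⟩ := Int.eq_ofNat_of_zero_le (Int.cast_nonneg_iff.1 h0)
    exact ⟨m, by simpa using ha⟩
  choose k hk using hKnat
  have hsum : ∀ i, ∑ b, x i (C b) / y (C b) = 1 := fun i => by
    rw [← hx1 i, ← Finset.sum_fiberwise_of_maps_to (g := C) (t := P) fun b _ => hC b]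
    refine Finset.sum_congr rfl fun q hq => ?_
    rw [Finset.sum_congr rfl (g := fun _ => x i q / y q)
      (fun b hb => by rw [(Finset.mem_filter.1 hb).2]), Finset.sum_const, hy q hq, nsmul_eq_mul]
    rcases Nat.eq_zero_or_pos (y q) with h | h
    · have hle := hK q hq
      rw [h, Nat.cast_zero, zero_mul] at hle
      have := (Finset.single_le_sum (fun i _ => hx i q) (Finset.mem_univ i)).trans hle
      simp [h, le_antisymm this (hx i q)]
    · have : (0 : ℝ) < y q := by exact_mod_cast h
      field_simp
  obtain ⟨f, hf⟩ := exists_rounded_assignment (x := fun i b => x i (C b) / y (C b)) (K := k)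
    hs he hse (fun i b => div_nonneg (hx _ _) (hypos b).le) hsum fun b => by
      rw [← Finset.sum_div, div_le_iff₀' (hypos b), ← hk]
      exact hK _ (hC b)
  refine ⟨f, fun b => ⟨?_, (hf b).2.trans (add_le_add_left ?_ e)⟩⟩
  · rw [hk]
    exact_mod_cast (hf b).1
  · simp only [div_mul_eq_mul_div]
    rw [← Finset.sum_div, div_le_iff₀' (hypos b)]
    exact hL _ (hC b)

/-- If the patterns `z` match the sizes `a` of the items in `A`, and the bins offer at least as
many slots of each size as `z` has parts, then all items can be cut into parts that fit into
the slots. -/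
theorem exists_part_multiplicities {T B : Type*} [Fintype B] {N M : ℕ}
    (A : Finset T) (a : T → ℕ) (z : (Fin N → Fin (M + 1)) → ℕ) (d : B → Fin N → ℕ)
    (hz : ∀ t ∈ A, ∑ p ∈ (feasiblePatterns N M).filter (fun p => patAlpha p = a t), z p
      = (A.filter fun u => a u = a t).card)
    (hd : ∀ r, ∑ p ∈ feasiblePatterns N M, (p r : ℕ) * z p ≤ ∑ b, d b r) :
    ∃ m : Fin N → A → B → ℕ,
      (∀ t, ∑ r : Fin N, ((r : ℕ) + 1) * ∑ b, m r t b = a t) ∧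
      ∀ r b, ∑ t, m r t b ≤ d b r := by
  have hex : ∀ n : ℕ, ∃ f : T → Fin N → Fin (M + 1), ∀ t ∈ A, a t = n →
      (f t ∈ feasiblePatterns N M ∧ patAlpha (f t) = n) ∧
        ((A.filter fun u => a u = n).filter fun u => f u = f t).card = z (f t) := by
    intro n
    by_cases hn : ∃ t ∈ A, a t = n
    · obtain ⟨t, ht, rfl⟩ := hn
      obtain ⟨f, hf, hfc⟩ := exists_map_with_fiber_card _ _ z (hz t ht)
      refine ⟨f, fun u hu hut => ?_⟩
      have := hf u (Finset.mem_filter.2 ⟨hu, hut⟩)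
      exact ⟨Finset.mem_filter.1 this, by convert hfc _ this⟩
    · push Not at hn
      exact ⟨fun _ => 0, fun t ht hta => absurd hta (hn t ht)⟩
  choose f hf using hex
  let P : T → Fin N → Fin (M + 1) := fun t => f (a t) t
  have hP : ∀ t ∈ A, P t ∈ feasiblePatterns N M ∧ patAlpha (P t) = a t :=
    fun t ht => (hf _ t ht rfl).1
  have hPcard : ∀ p, (A.filter fun t => P t = p).card ≤ z p := fun p => by
    rcases (A.filter fun t => P t = p).eq_empty_or_nonempty with h | ⟨t, htp⟩
    · simp [h]
    obtain ⟨ht, rfl⟩ := Finset.mem_filter.1 htp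
    rw [← (hf _ t ht rfl).2]
    refine Finset.card_le_card fun u hu => ?_
    obtain ⟨hu, hut⟩ := Finset.mem_filter.1 hu
    have hau : a u = a t := by rw [← (hP u hu).2, hut, (hP t ht).2]
    simp only [Finset.mem_filter]
    exact ⟨⟨hu, hau⟩, by simpa [P, hau] using hut⟩
  have hsupply : ∀ r, ∑ t : A, (P t r : ℕ) ≤ ∑ b, d b r := fun r => by
    rw [Finset.sum_coe_sort A fun t => (P t r : ℕ)]
    refine le_trans ?_ (hd r)
    rw [← Finset.sum_fiberwise_of_maps_to fun t ht => (hP t ht).1]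
    refine Finset.sum_le_sum fun p _ => ?_
    rw [Finset.sum_congr rfl (g := fun _ => (p r : ℕ))
      (fun t ht => by rw [(Finset.mem_filter.1 ht).2]), Finset.sum_const, smul_eq_mul, mul_comm]
    exact Nat.mul_le_mul_left _ (hPcard p)
  choose m hm hmd using fun r => exists_transport _ _ (hsupply r)
  refine ⟨m, fun t => ?_, hmd⟩
  simp only [hm]
  exact (hP t t.2).2

/-- If the MILP has a feasible solution `(v, x, y, z)`, then there is a feasible
fractional packing of the instance satisfying cardinality constraint `k` with maximum
bin load at most `g' + ε² + ε`, which is at most `(1 + 2ε)·g'`, for `g' = 1 + 4ε`. -/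
theorem packing_of_milp_solution {T B : Type*} [Fintype T] [Fintype B] (ε : ℝ)
    (hε : 0 < ε) (hε10 : ε ≤ 1 / 10) (hεint : ∃ n : ℤ, (1 : ℝ) / ε = n)
    (N M : ℕ) (hN : (N : ℝ) = (1 + 4 * ε) / ε ^ 2) (hM : (M : ℝ) = 1 / ε ^ 4)
    (S : T → ℝ) (hS : ∀ t, 0 ≤ S t)
    (hlarge : ∀ t, ε ≤ S t → S t ≤ 1 / ε ^ 2 ∧ ∃ a : ℕ, S t = (a : ℝ) * ε ^ 2)
    (k : ℕ) (hk : 1 ≤ k)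
    (hmilp : ∃ (v : Fin N → ℝ) (xv : T → (Fin (N + 1) × (Fin N → Fin (N + 1))) → ℝ)
      (y : (Fin (N + 1) × (Fin N → Fin (N + 1))) → ℕ) (z : (Fin N → Fin (M + 1)) → ℕ),
      (∀ r, 0 ≤ v r) ∧
      (∀ i c, 0 ≤ xv i c) ∧
      (∑ c ∈ feasibleConfigs N, y c = Fintype.card B) ∧
      (∀ i, S i < ε → ∑ c ∈ feasibleConfigs N, xv i c = 1) ∧
      (∀ r : Fin N, v r = ∑ p ∈ feasiblePatterns N M, ((p r : ℕ) : ℝ) * (z p : ℝ)) ∧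
      (∀ r : Fin N, v r = ∑ c ∈ feasibleConfigs N, ((c.2 r : ℕ) : ℝ) * (y c : ℝ)) ∧
      (∀ a : ℕ, ε ≤ (a : ℝ) * ε ^ 2 → (a : ℝ) * ε ^ 2 ≤ 1 / ε ^ 2 →
        ∑ p ∈ (feasiblePatterns N M).filter (fun p => patAlpha p = a), z p
          = (Finset.univ.filter (fun t : T => S t = (a : ℝ) * ε ^ 2)).card) ∧
      (∀ c ∈ feasibleConfigs N,
        ∑ i ∈ Finset.univ.filter (fun t : T => S t < ε), xv i c
          ≤ (y c : ℝ) * ((k : ℝ) - ∑ r : Fin N, ((c.2 r : ℕ) : ℝ))) ∧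
      (∀ c ∈ feasibleConfigs N,
        ∑ i ∈ Finset.univ.filter (fun t : T => S t < ε), xv i c * S i
          ≤ (y c : ℝ) * (((c.1 : ℕ) : ℝ) + 1) * ε ^ 2)) :
    (∃ x : T → B → ℝ,
      (∀ t b, 0 ≤ x t b) ∧
      (∀ t, ∑ b, x t b = S t) ∧
      (∀ b, {t | 0 < x t b}.ncard ≤ k) ∧
      (∀ b, ∑ t, x t b ≤ (1 + 4 * ε) + ε ^ 2 + ε)) ∧
    (1 + 4 * ε) + ε ^ 2 + ε ≤ (1 + 2 * ε) * (1 + 4 * ε) := by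
  obtain ⟨v, xv, y, z, -, hxv0, hyB, hxv1, hvz, hvy, hzl, hcard, hload⟩ := hmilp
  refine ⟨?_, by nlinarith⟩
  have hε2 : 0 < ε ^ 2 := by positivity
  set sm := Finset.univ.filter fun t : T => S t < ε with hsm
  set lg := Finset.univ.filter fun t : T => ¬ S t < ε with hlg
  have hsize : ∀ t, ∃ n : ℕ, ε ≤ S t → S t = n * ε ^ 2 := fun t => by
    by_cases ht : ε ≤ S t
    · obtain ⟨n, hn⟩ := (hlarge t ht).2
      exact ⟨n, fun _ => hn⟩
    · exact ⟨0, fun h => absurd h ht⟩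
  choose a ha using hsize
  obtain ⟨C, hC, hCy⟩ := exists_map_with_fiber_card (Finset.univ : Finset B) (feasibleConfigs N) y
    (by rw [hyB, Finset.card_univ])
  replace hC : ∀ b, C b ∈ feasibleConfigs N := fun b => hC b (Finset.mem_univ b)
  have hlgS : ∀ t : lg, S t = a t * ε ^ 2 := fun t =>
    ha t (not_lt.1 (Finset.mem_filter.1 t.2).2)
  obtain ⟨m, hma, hmd⟩ := exists_part_multiplicities lg a z (fun b r => ((C b).2 r : ℕ))
    (fun t ht => by
      have ht' : ε ≤ S t := not_lt.1 (Finset.mem_filter.1 ht).2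
      have hta := ha t ht'
      rw [hzl (a t) (hta ▸ ht') (hta ▸ (hlarge t ht').1)]
      congr 1
      ext u
      simp only [hlg, Finset.mem_filter, Finset.mem_univ, true_and, not_lt]
      refine ⟨fun hu => ?_, fun ⟨hu, hut⟩ => hut ▸ ha u hu⟩
      have hu' : ε ≤ S u := hu ▸ hta ▸ ht'
      refine ⟨hu', ?_⟩
      have := (ha u hu').symm.trans hu
      exact_mod_cast mul_right_cancel₀ hε2.ne' this)
    (fun r => by
      have h := (hvz r).symm.trans (hvy r)
      rw [← Finset.sum_fiberwise_of_maps_to (g := C) (t := feasibleConfigs N) fun b _ => hC b]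
      have h' : ∑ p ∈ feasiblePatterns N M, (p r : ℕ) * z p
          = ∑ c ∈ feasibleConfigs N, (c.2 r : ℕ) * y c := by exact_mod_cast h
      rw [h']
      refine Finset.sum_le_sum fun c hc => ?_
      rw [Finset.sum_congr rfl (g := fun _ => (c.2 r : ℕ))
        (fun b hb => by rw [(Finset.mem_filter.1 hb).2]), Finset.sum_const,
        smul_eq_mul, mul_comm]
      exact Nat.mul_le_mul_right _ (le_of_eq (by convert (hCy c hc).symm)))
  obtain ⟨f, hf⟩ := exists_rounded_assignment_of_types (I := sm) hC hCy (s := fun i => S i)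
    (e := ε) (fun i => hS i) hε.le (fun i => (Finset.mem_filter.1 i.2).2.le)
    (x := fun i c => xv i c) (fun i c => hxv0 i c)
    (fun i => hxv1 i (Finset.mem_filter.1 i.2).2)
    (K := fun c => (k : ℝ) - ∑ r : Fin N, ((c.2 r : ℕ) : ℝ))
    (L := fun c => (((c.1 : ℕ) : ℝ) + 1) * ε ^ 2)
    (fun c hc => by simpa only [Finset.sum_coe_sort sm fun i => xv i c] using hcard c hc)
    (fun c hc => by
      simpa only [Finset.sum_coe_sort sm fun i => xv i c * S i, mul_assoc] using hload c hc)
    (fun c => ⟨(k : ℤ) - ∑ r : Fin N, ((c.2 r : ℕ) : ℤ), by push_cast; rfl⟩)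
  have hmem : ∀ t, t ∉ sm → t ∈ lg := fun t ht => by simpa [hsm, hlg] using ht
  let x : T → B → ℝ := fun t b =>
    if h : t ∈ sm then (if f ⟨t, h⟩ = b then S t else 0)
    else ∑ r : Fin N, (((r : ℕ) : ℝ) + 1) * (m r ⟨t, hmem t h⟩ b : ℝ) * ε ^ 2
  have hxsm : ∀ (t : sm) b, x t b = if f t = b then S t else 0 := fun t b => by simp [x]
  have hxlg : ∀ (t : lg) b,
      x t b = ∑ r : Fin N, (((r : ℕ) : ℝ) + 1) * (m r t b : ℝ) * ε ^ 2 := fun t b => by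
    have : (t : T) ∉ sm := by simpa [hsm, hlg] using t.2
    simp [x, this]
  have hsplit : ∀ g : T → ℝ, ∑ t, g t = ∑ t : sm, g t + ∑ t : lg, g t := fun g => by
    rw [Finset.sum_coe_sort sm g, Finset.sum_coe_sort lg g, hsm, hlg,
      Finset.sum_filter_add_sum_filter_not]
  have hmdR : ∀ r b, ∑ t, (m r t b : ℝ) ≤ ((C b).2 r : ℕ) := fun r b => by
    exact_mod_cast hmd r b
  refine ⟨x, fun t b => ?_, fun t => ?_, fun b => ?_, fun b => ?_⟩
  · by_cases ht : t ∈ sm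
    · rw [hxsm ⟨t, ht⟩]
      split_ifs
      exacts [hS t, le_rfl]
    · rw [hxlg ⟨t, hmem t ht⟩]
      positivity
  · by_cases ht : t ∈ sm
    · simp only [hxsm ⟨t, ht⟩]
      simp
    · simp only [hxlg ⟨t, hmem t ht⟩]
      rw [Finset.sum_comm, hlgS ⟨t, hmem t ht⟩, ← hma ⟨t, hmem t ht⟩]
      push_cast
      simp only [Finset.sum_mul, Finset.mul_sum]
  · have hsmall : ∀ t : sm, (if 0 < x t b then (1 : ℝ) else 0) ≤ if f t = b then 1 else 0 :=
      fun t => by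
        rw [hxsm]
        by_cases h : f t = b
        · rw [if_pos h, if_pos h]
          split_ifs
          exacts [le_rfl, zero_le_one]
        · rw [if_neg h, if_neg h, if_neg (lt_irrefl _)]
    have hbig : ∀ t : lg, (if 0 < x t b then (1 : ℝ) else 0) ≤ ∑ r, (m r t b : ℝ) :=
      fun t => by
        split_ifs with h
        · rw [hxlg] at h
          obtain ⟨r, -, hr⟩ := Finset.exists_ne_zero_of_sum_ne_zero h.ne'
          have hr' : 1 ≤ m r t b := Nat.one_le_iff_ne_zero.2 fun h0 => hr (by simp [h0])
          have hr'' : (1 : ℝ) ≤ m r t b := by exact_mod_cast hr'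
          exact hr''.trans (Finset.single_le_sum (f := fun r => (m r t b : ℝ))
            (fun _ _ => Nat.cast_nonneg _) (Finset.mem_univ r))
        · positivity
    have hcount : (({t | 0 < x t b}.ncard : ℕ) : ℝ) ≤ k := by
      calc (({t | 0 < x t b}.ncard : ℕ) : ℝ) = ∑ t, if 0 < x t b then (1 : ℝ) else 0 := by
            rw [Finset.sum_boole, ← Set.ncard_coe_finset]
            simp
        _ ≤ ∑ t : sm, (if f t = b then (1 : ℝ) else 0) + ∑ t : lg, ∑ r, (m r t b : ℝ) := by
            rw [hsplit]
            exact add_le_add (Finset.sum_le_sum fun t _ => hsmall t)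
              (Finset.sum_le_sum fun t _ => hbig t)
        _ ≤ ((k : ℝ) - ∑ r, (((C b).2 r : ℕ) : ℝ)) + ∑ r, (((C b).2 r : ℕ) : ℝ) := by
            refine add_le_add ?_ ?_
            · rw [Finset.sum_boole]
              exact (hf b).1
            · rw [Finset.sum_comm]
              exact Finset.sum_le_sum fun r _ => hmdR r b
        _ = k := by ring
    exact_mod_cast hcount
  · have hw : (confWeight (C b) : ℝ) * ε ^ 2 ≤ 1 + 4 * ε := by
      rw [← le_div_iff₀ hε2, ← hN]
      exact_mod_cast (Finset.mem_filter.1 (hC b)).2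
    have hbig : ∑ t : lg, x t b
        ≤ (∑ r : Fin N, (((r : ℕ) : ℝ) + 1) * (((C b).2 r : ℕ) : ℝ)) * ε ^ 2 := by
      simp only [hxlg]
      rw [Finset.sum_comm, Finset.sum_mul]
      refine Finset.sum_le_sum fun r _ => ?_
      rw [← Finset.sum_mul, ← Finset.mul_sum]
      have := hmdR r b
      gcongr
    have hsmall : ∑ t : sm, x t b ≤ (((C b).1 : ℕ) + 1) * ε ^ 2 + ε := by
      simp only [hxsm]
      rw [← Finset.sum_filter]
      exact (hf b).2
    rw [hsplit]
    simp only [confWeight] at hw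
    push_cast at hw
    linarith
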